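/- Let f : 𝔹 → 𝔹 be regular (f(q) = ∑_{n≥0} qⁿaₙ converging on 𝔹, with f(𝔹) ⊆ 𝔹) and suppose f is a bijection of 𝔹 onto 𝔹. Then f is a regular Moebius transformation: there exist a ∈ ℍ with |a| < 1 and u ∈ ℍ with |u| = 1 such that for all q ∈ 𝔹, f(q) = (1 − q·conj(a))^{-*} * (q − a)·u, i.e. f(q) = (|a|²q² − 2Re(a)q + 1)⁻¹ · (−q²a + q(1 + a²) − a) · u. -/

import Mathlib

open Quaternion

section Abstract
variable {E : Type*} [NormedAddCommGroup E] [NormedSpace ℂ E] [FiniteDimensional ℂ E]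

theorem aux_isUnit (T : E →L[ℂ] E) (h : ∀ v, T v = 0 → v = 0) : IsUnit T := by
  have : CompleteSpace E := FiniteDimensional.complete ℂ E
  rw [ContinuousLinearMap.isUnit_iff_bijective]
  have hi : Function.Injective (T : E →ₗ[ℂ] E) :=
    (injective_iff_map_eq_zero (T : E →ₗ[ℂ] E)).2 h
  exact ⟨hi, LinearMap.injective_iff_surjective.1 hi⟩

theorem aux_max (T : ℂ → E →L[ℂ] E) (hT : DifferentiableOn ℂ T (Metric.ball 0 1))
    (r C : ℝ) (hr0 : 0 < r) (hr : r < 1) (hC : 0 ≤ C)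
    (hb : ∀ z : ℂ, ‖z‖ = r → ∀ v, ‖T z v‖ ≤ C * ‖v‖) (z : ℂ) (hz : ‖z‖ ≤ r) (v : E) :
    ‖T z v‖ ≤ C * ‖v‖ := by
  have h1 : ‖T z‖ ≤ C := by
    refine Complex.norm_le_of_forall_mem_frontier_norm_le (U := Metric.ball 0 r)
      Metric.isBounded_ball (hT.diffContOnCl_ball ?_) ?_ ?_
    · exact Metric.closedBall_subset_ball hr
    · intro y hy
      rw [frontier_ball _ hr0.ne'] at hy
      exact ContinuousLinearMap.opNorm_le_bound _ hC (hb y (by simpa using hy))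
    · rw [closure_ball _ hr0.ne']; simpa using hz
  exact (T z).le_of_opNorm_le h1 v

theorem aux_min (T : ℂ → E →L[ℂ] E) (hT : DifferentiableOn ℂ T (Metric.ball 0 1))
    (r C : ℝ) (hr0 : 0 < r) (hr : r < 1) (hC : 0 ≤ C)
    (hinj : ∀ z : ℂ, ‖z‖ ≤ r → ∀ v, T z v = 0 → v = 0)
    (hb : ∀ z : ℂ, ‖z‖ = r → ∀ v, ‖v‖ ≤ C * ‖T z v‖) (z : ℂ) (hz : ‖z‖ ≤ r) (v : E) :
    ‖v‖ ≤ C * ‖T z v‖ := by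
  have : CompleteSpace E := FiniteDimensional.complete ℂ E
  have hu : ∀ z : ℂ, ‖z‖ ≤ r → IsUnit (T z) := fun z hz => aux_isUnit _ (hinj z hz)
  have h1 : ‖Ring.inverse (T z)‖ ≤ C := by
    refine Complex.norm_le_of_forall_mem_frontier_norm_le (U := Metric.ball 0 r)
      (f := fun z => Ring.inverse (T z))
      Metric.isBounded_ball ?_ ?_ ?_
    · apply DifferentiableOn.diffContOnCl
      rw [closure_ball _ hr0.ne']
      intro y hy
      have hy' : ‖y‖ ≤ r := by simpa using hy
      have : DifferentiableAt ℂ T y := hT.differentiableAt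
        (Metric.isOpen_ball.mem_nhds (by simpa using hy'.trans_lt hr))
      exact (this.inverse (hu y hy')).differentiableWithinAt
    · intro y hy
      rw [frontier_ball _ hr0.ne'] at hy
      have hy' : ‖y‖ = r := by simpa using hy
      refine ContinuousLinearMap.opNorm_le_bound _ hC fun x => ?_
      have := hb y hy' (Ring.inverse (T y) x)
      rwa [← mul_apply_eq_comp, Ring.mul_inverse_cancel _ (hu y hy'.le)] at this
    · rw [closure_ball _ hr0.ne']; simpa using hz
  have := (Ring.inverse (T z)).le_of_opNorm_le h1 (T z v)
  rwa [← mul_apply_eq_comp, Ring.inverse_mul_cancel _ (hu z hz)] at this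

theorem aux_isometry (T : ℂ → E →L[ℂ] E) (hT : DifferentiableOn ℂ T (Metric.ball 0 1))
    (hinj : ∀ z : ℂ, ‖z‖ < 1 → ∀ v, T z v = 0 → v = 0)
    (hb : ∀ δ > 0, ∃ r0 < (1 : ℝ), ∀ z : ℂ, r0 ≤ ‖z‖ → ‖z‖ < 1 → ∀ v,
      ‖v‖ ≤ (1 + δ) * ‖T z v‖ ∧ ‖T z v‖ ≤ (1 + δ) * ‖v‖) (z : ℂ) (hz : ‖z‖ < 1) (v : E) :
    ‖T z v‖ = ‖v‖ := by
  have key : ∀ δ > 0, ‖v‖ ≤ (1 + δ) * ‖T z v‖ ∧ ‖T z v‖ ≤ (1 + δ) * ‖v‖ := by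
    intro δ hδ
    obtain ⟨r0, hr0, h⟩ := hb δ hδ
    obtain ⟨r, hr, hr1⟩ := exists_between (max_lt hr0 (max_lt hz one_pos))
    simp only [max_lt_iff] at hr
    constructor
    · exact aux_min T hT r _ hr.2.2 hr1 (by positivity) (fun z hz => hinj z (hz.trans_lt hr1))
        (fun z hz v => (h z (hz ▸ hr.1.le) (hz ▸ hr1) v).1) z hr.2.1.le v
    · exact aux_max T hT r _ hr.2.2 hr1 (by positivity)
        (fun z hz v => (h z (hz ▸ hr.1.le) (hz ▸ hr1) v).2) z hr.2.1.le v
  have lim : ∀ x : ℝ, Filter.Tendsto (fun δ : ℝ => (1 + δ) * x) (nhdsWithin 0 (Set.Ioi 0))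
      (nhds x) := by
    intro x
    have : Continuous (fun δ : ℝ => (1 + δ) * x) := by fun_prop
    have h2 := (this.tendsto 0).mono_left (nhdsWithin_le_nhds (s := Set.Ioi 0))
    simpa using h2
  apply le_antisymm
  · exact ge_of_tendsto (lim _) (by filter_upwards [self_mem_nhdsWithin] with δ hδ using (key δ hδ).2)
  · exact ge_of_tendsto (lim _) (by filter_upwards [self_mem_nhdsWithin] with δ hδ using (key δ hδ).1)

theorem aux_const (T : ℂ → E →L[ℂ] E) (hT : DifferentiableOn ℂ T (Metric.ball 0 1))
    (hsc : ∀ x y : E, ‖x‖ = 1 → ‖y‖ = 1 → x ≠ y → ‖x + y‖ ≠ 2)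
    (hiso : ∀ z : ℂ, ‖z‖ < 1 → ∀ v, ‖T z v‖ = ‖v‖) (a z : ℂ) (ha : ‖a‖ < 1) (hz : ‖z‖ < 1) (v : E) :
    T z v = T a v := by
  have : StrictConvexSpace ℝ E := StrictConvexSpace.of_norm_add_ne_two (fun x y => hsc x y)
  have := Complex.eqOn_of_isPreconnected_of_isMaxOn_norm (f := fun z => T z v)
    (U := Metric.ball 0 1) (c := a) (convex_ball (0 : ℂ) 1).isPreconnected Metric.isOpen_ball
    (hT.clm_apply (differentiableOn_const v)) (by simpa using ha) (by
      intro y hy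
      simp only [Function.comp, Set.mem_ofPred_eq]
      rw [hiso y (by simpa using hy), hiso a ha])
  exact this (by simpa using hz)

theorem aux_deriv (φ : ℂ → E) (h : ∀ x : ℝ, 0 ≤ x → x ≤ 1 / 2 → HasDerivAt φ 0 (x : ℂ)) :
    φ ((1 / 2 : ℝ) : ℂ) = φ ((0 : ℝ) : ℂ) := by
  have h' : ∀ x : ℝ, 0 ≤ x → x ≤ 1 / 2 → HasDerivAt (fun x : ℝ => φ x) 0 x := by
    intro x h0 h1
    have := (h x h0 h1).scomp x Complex.ofRealCLM.hasDerivAt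
    simpa using! this
  refine constant_of_has_deriv_right_zero (f := fun x : ℝ => φ x) (a := 0) (b := 1 / 2) ?_ ?_ _ ?_
  · intro x hx
    exact (h' x hx.1 hx.2).continuousAt.continuousWithinAt
  · intro x hx
    exact (h' x hx.1 hx.2.le).hasDerivWithinAt
  · norm_num

theorem aux_hasSum_apply {F : ℕ → E →L[ℂ] E} {A : E →L[ℂ] E} (h : HasSum F A) (v : E) :
    HasSum (fun n => F n v) (A v) :=
  (ContinuousLinearMap.apply ℂ E v).hasSum h

theorem aux_smul_apply (z : ℂ) (A : E →L[ℂ] E) (v : E) : (z • A) v = z • A v := rfl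

theorem aux_deriv_apply {A : ℂ → E →L[ℂ] E} {D : E →L[ℂ] E} {z : ℂ} (h : HasDerivAt A D z) (v : E) :
    HasDerivAt (fun z => A z v) (D v) z := by
  simpa using h.clm_apply (hasDerivAt_const z v)

theorem aux_slope (φ : ℂ → E) (D : E) (a : ℝ) (h : HasDerivAt φ D (a : ℂ)) :
    Filter.Tendsto (fun x : ℝ => ((x - a : ℝ) : ℂ)⁻¹ • (φ x - φ a)) (nhdsWithin a {a}ᶜ) (nhds D) := by
  have h1 := h.tendsto_slope
  have h2 : Filter.Tendsto (fun x : ℝ => (x : ℂ)) (nhdsWithin a {a}ᶜ)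
      (nhdsWithin (a : ℂ) {(a : ℂ)}ᶜ) := by
    apply tendsto_nhdsWithin_of_tendsto_nhds_of_eventually_within
    · exact (Complex.continuous_ofReal.tendsto a).mono_left nhdsWithin_le_nhds
    · filter_upwards [self_mem_nhdsWithin] with x hx
      simpa using hx
  have h3 := h1.comp h2
  refine h3.congr fun x => ?_
  simp [slope, vsub_eq_sub]

end Abstract

section Abstract2
variable {E : Type*} [NormedAddCommGroup E] [NormedSpace ℂ E] [FiniteDimensional ℂ E]

theorem real_aux (M N η x δ V : ℝ) (hN : 0 ≤ N) (hδ : 0 < δ) (hη : 0 < η)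
    (hV : 0 ≤ V)
    (h1 : M ^ 2 ≤ N ^ 2 + 2 * x * V ^ 2) (h2 : η * V ≤ N) (h3 : x ≤ δ * η ^ 2) :
    M ≤ (1 + δ) * N := by
  apply le_of_sq_le_sq _ (by positivity)
  have h4 : (η * V) ^ 2 ≤ N ^ 2 := by gcongr
  have h5 : x * V ^ 2 ≤ δ * η ^ 2 * V ^ 2 := by gcongr
  nlinarith [sq_nonneg (δ * N)]

theorem cplx_aux (a : ℝ) (z : ℂ) :
    ‖1 - a * z‖ ^ 2 = ‖z - a‖ ^ 2 + (1 - a ^ 2) * (1 - ‖z‖ ^ 2) := by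
  simp only [Complex.sq_norm, Complex.normSq_apply]
  simp
  ring

theorem aux_main (A : ℂ → E →L[ℂ] E) (hA : DifferentiableOn ℂ A (Metric.ball 0 1))
    (a : ℝ) (ha0 : 0 ≤ a) (ha1 : a ≤ 1 / 2) (R S : E →L[ℂ] E) (hR : A a = R)
    (hK : ∀ z : ℂ, ‖z‖ < 1 → ∀ v, v - S (A z v) = 0 → v = 0)
    (hT : ∀ z : ℂ, ‖z‖ < 1 → z ≠ a → ∀ v, A z v - R v = 0 → v = 0)
    (hD : ∀ v, deriv A a v = 0 → v = 0)
    (hbd : ∀ z : ℂ, ‖z‖ < 1 → ∀ v, ‖A z v - R v‖ ≤ ‖v - S (A z v)‖)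
    (hpr : ∀ δ > 0, ∃ r0 < (1 : ℝ), ∀ z : ℂ, r0 ≤ ‖z‖ → ‖z‖ < 1 → ∀ v,
      ‖v - S (A z v)‖ ≤ (1 + δ) * ‖A z v - R v‖)
    (hsc : ∀ x y : E, ‖x‖ = 1 → ‖y‖ = 1 → x ≠ y → ‖x + y‖ ≠ 2) :
    ∃ U : E →L[ℂ] E, (∀ v, ‖U v‖ = ‖v‖) ∧
      (∀ z : ℂ, ‖z‖ < 1 → ∀ v, (z - a) • U (v - S (A z v)) = (1 - a * z) • (A z v - R v)) ∧
      ∀ v, U (v - S (A a v)) = (1 - a * a : ℂ) • deriv A a v := by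
  have : CompleteSpace E := FiniteDimensional.complete ℂ E
  have haz : ‖(a : ℂ)‖ < 1 := by
    rw [Complex.norm_real, Real.norm_eq_abs, abs_of_nonneg ha0]; linarith
  set K : ℂ → E →L[ℂ] E := fun z => 1 - S * A z with hKdef
  have hKa : ∀ z v, K z v = v - S (A z v) := fun z v => rfl
  have hKu : ∀ z : ℂ, ‖z‖ < 1 → IsUnit (K z) := fun z hz => aux_isUnit _ (hK z hz)
  set B := dslope A a with hB
  have hBd : DifferentiableOn ℂ B (Metric.ball 0 1) :=
    (Complex.differentiableOn_dslope (Metric.isOpen_ball.mem_nhds (by simpa using haz))).2 hA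
  have hBT : ∀ (z : ℂ) (v : E), (z - a) • B z v = A z v - R v := by
    intro z v
    have := sub_smul_dslope A (a : ℂ) z
    have h2 := congrArg (fun L : E →L[ℂ] E => L v) this
    rw [hR] at h2
    exact h2
  have hBa : B a = deriv A a := dslope_same _ _
  set h : ℂ → E →L[ℂ] E := fun z => (1 - a * z) • (B z * Ring.inverse (K z)) with hh
  have hhK : ∀ z : ℂ, ‖z‖ < 1 → ∀ v, h z (v - S (A z v)) = (1 - a * z) • B z v := by
    intro z hz v
    have h1 : (Ring.inverse (K z) * K z) v = v := by rw [Ring.inverse_mul_cancel _ (hKu z hz)]; rfl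
    change (1 - a * z) • B z ((Ring.inverse (K z) * K z) v) = _
    rw [h1]
  have hsurj : ∀ z : ℂ, ‖z‖ < 1 → ∀ y : E, ∃ v, y = v - S (A z v) := by
    intro z hz y
    refine ⟨Ring.inverse (K z) y, ?_⟩
    change y = (K z * Ring.inverse (K z)) y
    rw [Ring.mul_inverse_cancel _ (hKu z hz)]; rfl
  have hid : ∀ z : ℂ, ‖z‖ < 1 → ∀ v,
      (z - a) • h z (v - S (A z v)) = (1 - a * z) • (A z v - R v) := by
    intro z hz v
    rw [hhK z hz, smul_comm, hBT]
  have hnz : ∀ z : ℂ, ‖z‖ < 1 → 0 < ‖1 - a * z‖ := by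
    intro z hz
    rw [norm_pos_iff]
    intro h0
    have h1 : (1 : ℂ) = a * z := sub_eq_zero.1 h0
    have h2 := congrArg norm h1
    rw [norm_mul, norm_one] at h2
    nlinarith [norm_nonneg z, norm_nonneg (a : ℂ)]
  have hhd : DifferentiableOn ℂ h (Metric.ball 0 1) := by
    intro z hz
    have hz' : ‖z‖ < 1 := by simpa using hz
    have d1 : DifferentiableAt ℂ A z := hA.differentiableAt (Metric.isOpen_ball.mem_nhds hz)
    have d2 : DifferentiableAt ℂ B z := hBd.differentiableAt (Metric.isOpen_ball.mem_nhds hz)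
    have d3 : DifferentiableAt ℂ K z := (differentiableAt_const _).sub (d1.const_mul S)
    have d4 := d3.inverse (hKu z hz')
    have d5 : DifferentiableAt ℂ (fun z : ℂ => 1 - (a : ℂ) * z) z := by fun_prop
    exact (d5.smul (d2.mul d4)).differentiableWithinAt
  have hinj : ∀ z : ℂ, ‖z‖ < 1 → ∀ v, h z v = 0 → v = 0 := by
    intro z hz y hy
    obtain ⟨v, rfl⟩ := hsurj z hz y
    rw [hhK z hz, smul_eq_zero] at hy
    have hBv : B z v = 0 := hy.resolve_left (norm_pos_iff.1 (hnz z hz))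
    have hv : v = 0 := by
      by_cases hza : z = a
      · rw [hza, hBa] at hBv; exact hD v hBv
      · apply hT z hz hza
        rw [← hBT, hBv, smul_zero]
    simp [hv]
  have hiso : ∀ z : ℂ, ‖z‖ < 1 → ∀ v, ‖h z v‖ = ‖v‖ := by
    apply aux_isometry h hhd hinj
    intro δ hδ
    obtain ⟨r1, hr1, hp⟩ := hpr δ hδ
    refine ⟨max r1 (max (3 / 4) (1 - δ / 16)), max_lt hr1 (max_lt (by norm_num) (by linarith)), ?_⟩
    intro z hz0 hz1 y
    simp only [max_le_iff] at hz0
    obtain ⟨hz2, hz3, hz4⟩ := hz0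
    obtain ⟨v, rfl⟩ := hsurj z hz1 y
    have e := congrArg norm (hid z hz1 v)
    rw [norm_smul, norm_smul] at e
    have c1 := cplx_aux a z
    have c2 : 1 / 4 ≤ ‖z - a‖ := by
      have := norm_sub_norm_le z a
      rw [Complex.norm_real, Real.norm_eq_abs, abs_of_nonneg ha0] at this
      linarith
    have c3 : ‖z - a‖ ≤ ‖1 - a * z‖ := by
      apply le_of_sq_le_sq _ (norm_nonneg _)
      rw [c1]
      have : 0 ≤ (1 - a ^ 2) * (1 - ‖z‖ ^ 2) := by
        apply mul_nonneg
        · nlinarith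
        · nlinarith
      linarith
    have c4 : ‖1 - a * z‖ ≤ (1 + δ) * ‖z - a‖ := by
      apply real_aux _ _ (1 / 4) (1 - ‖z‖) δ 1 (norm_nonneg _) hδ (by norm_num) (by norm_num)
      · rw [c1]
        have : (1 - a ^ 2) * (1 - ‖z‖ ^ 2) ≤ 1 * (1 - ‖z‖ ^ 2) := by
          gcongr
          · nlinarith
          · nlinarith
        nlinarith
      · linarith
      · linarith
    have c5 := hp z hz2 hz1 v
    have c6 := hbd z hz1 v
    have c7 := hnz z hz1
    constructor
    · refine c5.trans ?_
      gcongr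
      have : ‖1 - a * z‖ * ‖A z v - R v‖ ≤ ‖1 - a * z‖ * ‖h z (v - S (A z v))‖ := by
        rw [← e]; gcongr
      exact le_of_mul_le_mul_left this c7
    · have h0 : 0 < ‖z - a‖ := by linarith
      apply le_of_mul_le_mul_left _ h0
      rw [e]
      calc ‖1 - a * z‖ * ‖A z v - R v‖ ≤ ((1 + δ) * ‖z - a‖) * ‖v - S (A z v)‖ := by gcongr
        _ = _ := by ring
  have hconst := fun z hz v => aux_const h hhd hsc hiso a z haz hz v
  refine ⟨h a, hiso a haz, ?_, ?_⟩
  · intro z hz v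
    rw [← hconst z hz, hid z hz]
  · intro v
    rw [hhK a haz, hBa]

end Abstract2

section Quat

theorem aux_norm_coe (z : ℂ) : ‖(z : ℍ[ℝ])‖ = ‖z‖ := by
  rw [← sq_eq_sq₀ (norm_nonneg _) (norm_nonneg _), pow_two, ← Quaternion.normSq_eq_norm_mul_self,
    Complex.sq_norm, Quaternion.normSq_def', Complex.normSq_apply]
  simp; ring

/-- Left multiplication makes `ℍ` a complex normed space. -/
@[reducible] noncomputable def nsC : NormedSpace ℂ ℍ[ℝ] where
  smul z q := (z : ℍ[ℝ]) * q
  one_smul q := show ((1 : ℂ) : ℍ[ℝ]) * q = q by simp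
  mul_smul z w q := show ((z * w : ℂ) : ℍ[ℝ]) * q = z * (w * q) by simp [mul_assoc]
  smul_zero z := show (z : ℍ[ℝ]) * 0 = 0 by simp
  smul_add z p q := show (z : ℍ[ℝ]) * (p + q) = z * p + z * q by rw [mul_add]
  add_smul z w q := show ((z + w : ℂ) : ℍ[ℝ]) * q = z * q + w * q by simp [add_mul]
  zero_smul q := show ((0 : ℂ) : ℍ[ℝ]) * q = 0 by simp
  norm_smul_le z q := show ‖(z : ℍ[ℝ]) * q‖ ≤ _ by rw [norm_mul, aux_norm_coe]

attribute [local instance] nsC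

theorem aux_smul (z : ℂ) (q : ℍ[ℝ]) : z • q = (z : ℍ[ℝ]) * q := rfl

theorem fdC : FiniteDimensional ℂ ℍ[ℝ] := by
  have : IsScalarTower ℝ ℂ ℍ[ℝ] := ⟨fun r z q => by
    rw [aux_smul, aux_smul]
    ext <;> simp <;> ring⟩
  exact Module.Finite.of_restrictScalars_finite ℝ ℂ ℍ[ℝ]

attribute [local instance] fdC

/-- Right multiplication. -/
noncomputable def rm (c : ℍ[ℝ]) : ℍ[ℝ] →L[ℂ] ℍ[ℝ] :=
  LinearMap.mkContinuous
    { toFun := fun v => v * c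
      map_add' := fun x y => add_mul x y c
      map_smul' := fun z x => by rw [aux_smul, mul_assoc]; rfl } ‖c‖
    (fun v => by simp [mul_comm])

@[simp] theorem rm_apply (c v : ℍ[ℝ]) : rm c v = v * c := rfl

theorem rm_norm (c : ℍ[ℝ]) : ‖rm c‖ ≤ ‖c‖ := LinearMap.mkContinuous_norm_le _ (norm_nonneg _) _

theorem aux_sc (x y : ℍ[ℝ]) (hx : ‖x‖ = 1) (hy : ‖y‖ = 1) (hxy : x ≠ y) : ‖x + y‖ ≠ 2 := by
  intro h
  have := parallelogram_law_with_norm ℝ x y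
  rw [h, hx, hy] at this
  have h2 : ‖x - y‖ = 0 := by nlinarith [norm_nonneg (x - y)]
  exact hxy (sub_eq_zero.1 (norm_eq_zero.1 h2))

theorem aux_conj (q : ℍ[ℝ]) : ∃ (z : ℂ) (v : ℍ[ℝ]), v ≠ 0 ∧ v * q = z * v := by
  by_cases h : q.imJ = 0 ∧ q.imK = 0
  · refine ⟨⟨q.re, q.imI⟩, 1, one_ne_zero, ?_⟩
    ext <;> simp [h.1, h.2]
  · have hn : 0 ≤ q.imI ^ 2 + q.imJ ^ 2 + q.imK ^ 2 := by positivity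
    obtain ⟨n, hn'⟩ : ∃ n : ℝ, n ^ 2 = q.imI ^ 2 + q.imJ ^ 2 + q.imK ^ 2 :=
      ⟨_, Real.sq_sqrt hn⟩
    obtain ⟨v, v0, v1, v2, v3⟩ : ∃ v : ℍ[ℝ], v.re = 0 ∧ v.imI = q.imI + n ∧ v.imJ = q.imJ ∧
      v.imK = q.imK := ⟨⟨0, q.imI + n, q.imJ, q.imK⟩, rfl, rfl, rfl, rfl⟩
    refine ⟨⟨q.re, n⟩, v, ?_, ?_⟩
    · intro h0
      apply h
      rw [h0] at v2 v3
      exact ⟨v2.symm, v3.symm⟩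
    · ext <;> simp [v0, v1, v2, v3] <;> ring_nf
      rw [hn']; ring

/-- The operator-valued function attached to a power series. -/
noncomputable def opA (c : ℕ → ℍ[ℝ]) (z : ℂ) : ℍ[ℝ] →L[ℂ] ℍ[ℝ] := ∑' n, z ^ n • rm (c n)

theorem aux_summable (f : ℍ[ℝ] → ℍ[ℝ]) (c : ℕ → ℍ[ℝ])
    (hf : ∀ q ∈ Metric.ball (0 : ℍ[ℝ]) 1, HasSum (fun n : ℕ => q ^ n * c n) (f q))
    (r : ℝ) (hr0 : 0 ≤ r) (hr : r < 1) : Summable (fun n => r ^ n * ‖c n‖) := by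
  obtain ⟨s, hs, hs1⟩ := exists_between hr
  have hs0 : 0 < s := hr0.trans_lt hs
  have h1 := (hf (s : ℍ[ℝ]) (by simp [abs_of_pos hs0, hs1])).summable.tendsto_atTop_zero
  have h2 := h1.norm.bddAbove_range
  obtain ⟨M, hM⟩ := h2
  have hM' : ∀ n, s ^ n * ‖c n‖ ≤ M := by
    intro n
    have := hM ⟨n, rfl⟩
    simpa [abs_of_pos hs0] using this
  have hg : Summable (fun n : ℕ => (r / s) ^ n * M) :=
    (summable_geometric_of_lt_one (by positivity) ((div_lt_one hs0).2 hs)).mul_right M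
  refine Summable.of_nonneg_of_le (fun n => by positivity) (fun n => ?_) hg
  calc r ^ n * ‖c n‖ = (r / s) ^ n * (s ^ n * ‖c n‖) := by
        rw [div_pow]; field_simp
    _ ≤ _ := by gcongr; exact hM' n

theorem aux_normA (c : ℕ → ℍ[ℝ]) (z : ℂ) (r : ℝ) (hz : ‖z‖ ≤ r) (n : ℕ) :
    ‖z ^ n • rm (c n)‖ ≤ r ^ n * ‖c n‖ := by
  have hr : 0 ≤ r := (norm_nonneg z).trans hz
  rw [norm_smul, norm_pow]
  gcongr
  exact rm_norm _

theorem opA_diff (f : ℍ[ℝ] → ℍ[ℝ]) (c : ℕ → ℍ[ℝ])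
    (hf : ∀ q ∈ Metric.ball (0 : ℍ[ℝ]) 1, HasSum (fun n : ℕ => q ^ n * c n) (f q)) :
    DifferentiableOn ℂ (opA c) (Metric.ball 0 1) := by
  intro z hz
  have hz' : ‖z‖ < 1 := by simpa using hz
  obtain ⟨r, hr, hr1⟩ := exists_between hz'
  have hr0 : 0 ≤ r := (norm_nonneg z).trans hr.le
  have := Complex.differentiableOn_tsum_of_summable_norm (F := fun n (z : ℂ) => z ^ n • rm (c n))
    (U := Metric.ball 0 r)
    (aux_summable f c hf r hr0 hr1) (fun n => by fun_prop) Metric.isOpen_ball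
    (fun n w hw => aux_normA c w r (by simpa using (Metric.mem_ball.1 hw).le) n)
  exact (this.differentiableAt (Metric.isOpen_ball.mem_nhds (by simpa using hr))).differentiableWithinAt

theorem opA_apply (f : ℍ[ℝ] → ℍ[ℝ]) (c : ℕ → ℍ[ℝ])
    (hf : ∀ q ∈ Metric.ball (0 : ℍ[ℝ]) 1, HasSum (fun n : ℕ => q ^ n * c n) (f q))
    (z : ℂ) (hz : ‖z‖ < 1) (q v : ℍ[ℝ]) (hq : ‖q‖ < 1) (hv : v * q = z * v) :
    opA c z v = v * f q := by
  have hs : Summable (fun n => z ^ n • rm (c n)) :=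
    Summable.of_norm_bounded (aux_summable f c hf ‖z‖ (norm_nonneg _) hz)
      (fun n => aux_normA c z _ le_rfl n)
  have h0 : HasSum (fun n => z ^ n • rm (c n)) (opA c z) := hs.hasSum
  have h1 : HasSum (fun n => (z ^ n • rm (c n)) v) (opA c z v) :=
    aux_hasSum_apply h0 v
  have h2 := (hf q (by simpa using hq)).mul_left v
  have h3 : ∀ n : ℕ, ((z ^ n : ℂ) : ℍ[ℝ]) * v = v * q ^ n := by
    intro n
    induction n with
    | zero => simp
    | succ k ih =>
      rw [pow_succ, Quaternion.coeComplex_mul, mul_assoc, ← hv, ← mul_assoc, ih, mul_assoc,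
        ← pow_succ]
  have h4 : (fun n => (z ^ n • rm (c n)) v) = fun n => v * (q ^ n * c n) := by
    funext n
    have : (z ^ n • rm (c n)) v = ((z ^ n : ℂ) : ℍ[ℝ]) * (v * c n) := aux_smul_apply _ _ _
    rw [this, ← mul_assoc, h3, mul_assoc]
  rw [h4] at h1
  exact h1.unique h2

theorem aux_cont (f : ℍ[ℝ] → ℍ[ℝ]) (c : ℕ → ℍ[ℝ])
    (hf : ∀ q ∈ Metric.ball (0 : ℍ[ℝ]) 1, HasSum (fun n : ℕ => q ^ n * c n) (f q)) :
    ContinuousOn f (Metric.ball 0 1) := by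
  intro z hz
  have hz' : ‖z‖ < 1 := by simpa using hz
  obtain ⟨r, hr, hr1⟩ := exists_between hz'
  have hr0 : 0 ≤ r := (norm_nonneg z).trans hr.le
  have := continuousOn_tsum (f := fun n (q : ℍ[ℝ]) => q ^ n * c n) (s := Metric.ball 0 r)
    (fun n => by fun_prop) (aux_summable f c hf r hr0 hr1) (fun n w hw => by
      rw [norm_mul, norm_pow]
      gcongr
      simpa using (Metric.mem_ball.1 hw).le)
  have h2 : ContinuousOn f (Metric.ball 0 r) := by
    refine this.congr fun q hq => ?_
    exact (hf q (Metric.ball_subset_ball hr1.le hq)).tsum_eq.symm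
  exact (h2.continuousAt (Metric.isOpen_ball.mem_nhds (by simpa using hr))).continuousWithinAt


theorem alg_final (b q g : ℍ[ℝ]) (hb : ‖b‖ < 1) (hq : ‖q‖ < 1)
    (hg : g - q * g * star b = q - b) :
    g = (((‖b‖ ^ 2 : ℝ) : ℍ[ℝ]) * q ^ 2 - ((2 * b.re : ℝ) : ℍ[ℝ]) * q + 1)⁻¹ *
          (-(q ^ 2) * b + q * (1 + b ^ 2) - b) := by
  have e1 : star b * b = ((‖b‖ ^ 2 : ℝ) : ℍ[ℝ]) := by
    rw [Quaternion.star_mul_self, Quaternion.normSq_eq_norm_mul_self, pow_two]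
  have e2 : star b = ((2 * b.re : ℝ) : ℍ[ℝ]) - b := by
    ext <;> simp; ring
  have hD : ∀ g : ℍ[ℝ], (((‖b‖ ^ 2 : ℝ) : ℍ[ℝ]) * q ^ 2 - ((2 * b.re : ℝ) : ℍ[ℝ]) * q + 1) * g =
      (g - q * g * star b) - q * (g - q * g * star b) * b := by
    intro g
    have e3 : q * (q * g * star b) * b = ((‖b‖ ^ 2 : ℝ) : ℍ[ℝ]) * q ^ 2 * g := by
      calc q * (q * g * star b) * b = q ^ 2 * g * (star b * b) := by noncomm_ring
        _ = _ := by rw [e1, ← (Quaternion.coe_commutes _ _), mul_assoc]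
    have e4 : q * g * star b + q * g * b = ((2 * b.re : ℝ) : ℍ[ℝ]) * q * g := by
      rw [← mul_add, e2, sub_add_cancel, ← Quaternion.coe_commutes, mul_assoc]
    calc _ = ((‖b‖ ^ 2 : ℝ) : ℍ[ℝ]) * q ^ 2 * g - ((2 * b.re : ℝ) : ℍ[ℝ]) * q * g + g := by
          noncomm_ring
      _ = _ := by rw [← e3, ← e4]; noncomm_ring
  have hqb : ‖q‖ * ‖b‖ < 1 := by nlinarith [norm_nonneg q, norm_nonneg b]
  have hinj : ∀ (c y : ℍ[ℝ]), ‖c‖ = ‖b‖ → y - q * y * c = 0 → y = 0 := by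
    intro c y hc hy
    have h1 : ‖y‖ = ‖q‖ * ‖y‖ * ‖c‖ := by
      rw [← norm_mul, ← norm_mul, ← sub_eq_zero.1 hy]
    by_contra hne
    have : 0 < ‖y‖ := norm_pos_iff.2 hne
    rw [hc] at h1
    nlinarith
  have hD0 : (((‖b‖ ^ 2 : ℝ) : ℍ[ℝ]) * q ^ 2 - ((2 * b.re : ℝ) : ℍ[ℝ]) * q + 1) ≠ 0 := by
    intro h0
    have h1 := hD 1
    rw [h0, zero_mul] at h1
    have h2 := hinj b _ rfl h1.symm
    exact one_ne_zero (hinj (star b) 1 (Quaternion.norm_star b) h2)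
  rw [eq_inv_mul_iff_mul_eq₀ hD0, hD, hg]
  noncomm_ring

theorem alg_main (a : ℝ) (w u : ℍ[ℝ]) (ha : |a| < 1) (hw : ‖w‖ < 1) (hu : ‖u‖ = 1) :
    ∃ b u' : ℍ[ℝ], ‖b‖ < 1 ∧ ‖u'‖ = 1 ∧ ∀ q F : ℍ[ℝ], ‖q‖ < 1 →
      (q - a) * (1 - F * star w) * u = (1 - a * q) * (F - w) →
      F = (((‖b‖ ^ 2 : ℝ) : ℍ[ℝ]) * q ^ 2 - ((2 * b.re : ℝ) : ℍ[ℝ]) * q + 1)⁻¹ *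
          (-(q ^ 2) * b + q * (1 + b ^ 2) - b) * u' := by
  have hu1 : u * star u = 1 := by
    rw [Quaternion.self_mul_star, Quaternion.normSq_eq_norm_mul_self, hu]; simp
  have hu2 : star u * u = 1 := by
    rw [Quaternion.star_mul_self, Quaternion.normSq_eq_norm_mul_self, hu]; simp
  have hw1 : star w * w = ((‖w‖ * ‖w‖ : ℝ) : ℍ[ℝ]) := by
    rw [Quaternion.star_mul_self, Quaternion.normSq_eq_norm_mul_self]
  have hw2 : w * star w = ((‖w‖ * ‖w‖ : ℝ) : ℍ[ℝ]) := by
    rw [Quaternion.self_mul_star, Quaternion.normSq_eq_norm_mul_self]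
  obtain ⟨s, hs⟩ : ∃ s, s = 1 - a • (star w * u) := ⟨_, rfl⟩
  obtain ⟨t, ht⟩ : ∃ t, t = star w * u - (a : ℍ[ℝ]) := ⟨_, rfl⟩
  obtain ⟨p, hp⟩ : ∃ p, p = w - a • u := ⟨_, rfl⟩
  obtain ⟨r, hr⟩ : ∃ r, r = u - a • w := ⟨_, rfl⟩
  have hss : star s = 1 - a • (star u * w) := by rw [hs]; simp
  have hrs : r = u * star s := by
    rw [hss, hr, mul_sub, mul_smul_comm, ← mul_assoc, hu1]; simp
  have hst : star s * t = star p * r := by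
    have h1 : star u * w * (star w * u) = star w * w := by
      calc star u * w * (star w * u) = star u * (w * star w) * u := by noncomm_ring
        _ = _ := by rw [hw2, ← Quaternion.coe_commutes, mul_assoc, hu2, hw1, mul_one]
    have h2 : ∀ x : ℍ[ℝ], x * (a : ℍ[ℝ]) = a • x := fun x => Quaternion.mul_coe_eq_smul a x
    rw [hss, ht, hp, hr]
    simp only [star_sub, Quaternion.star_smul, sub_mul, mul_sub, smul_mul_assoc, mul_smul_comm,
      one_mul, h2, h1, hu2]
    module
  have hs0 : s ≠ 0 := by
    intro h0
    have h1 : (1 : ℍ[ℝ]) = a • (star w * u) := sub_eq_zero.1 (hs ▸ h0)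
    have h2 := congrArg norm h1
    rw [norm_smul, norm_mul, Quaternion.norm_star, hu, norm_one, Real.norm_eq_abs] at h2
    nlinarith [norm_nonneg w, abs_nonneg a]
  have hrn : ‖r‖ = ‖s‖ := by rw [hrs, norm_mul, hu, Quaternion.norm_star, one_mul]
  have hr0 : r ≠ 0 := by rw [← norm_pos_iff, hrn]; exact norm_pos_iff.2 hs0
  have hpr : ‖p‖ < ‖r‖ := by
    have h1 : ‖r‖ * ‖r‖ - ‖p‖ * ‖p‖ = (1 - a ^ 2) * (‖u‖ * ‖u‖ - ‖w‖ * ‖w‖) := by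
      simp only [← Quaternion.normSq_eq_norm_mul_self, Quaternion.normSq_def', hr, hp]
      simp
      ring
    have h2 : a ^ 2 < 1 := (sq_lt_one_iff_abs_lt_one a).2 ha
    have h3 : 0 < ‖u‖ * ‖u‖ - ‖w‖ * ‖w‖ := by rw [hu]; nlinarith [norm_nonneg w]
    have h4 : 0 < ‖r‖ * ‖r‖ - ‖p‖ * ‖p‖ := by rw [h1]; exact mul_pos (by linarith) h3
    nlinarith [norm_nonneg p, norm_nonneg r]
  have hrp : 0 < ‖r‖ := norm_pos_iff.2 hr0
  have hcomm : star s * s⁻¹ = s⁻¹ * star s := by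
    have h1 : star s * s = s * star s := by
      rw [Quaternion.star_mul_self, Quaternion.self_mul_star]
    calc star s * s⁻¹ = s⁻¹ * (s * star s) * s⁻¹ := by rw [inv_mul_cancel_left₀ hs0]
      _ = s⁻¹ * star s := by rw [← h1]; rw [mul_assoc, mul_assoc, mul_inv_cancel₀ hs0, mul_one]
  have hb : r * s⁻¹ * t = - star (-p * r⁻¹) * r := by
    have h1 : star r = s * star u := by rw [hrs]; simp
    have h2 : (star r)⁻¹ = u * s⁻¹ := by
      rw [h1, mul_inv_rev]
      congr 1
      exact inv_eq_of_mul_eq_one_right hu2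
    calc r * s⁻¹ * t = u * (star s * s⁻¹) * t := by rw [hrs]; noncomm_ring
      _ = u * s⁻¹ * (star s * t) := by rw [hcomm]; noncomm_ring
      _ = (star r)⁻¹ * (star p * r) := by rw [hst, h2]
      _ = _ := by rw [star_mul, star_neg, star_inv₀]; noncomm_ring
  have hu' : r * s⁻¹ ≠ 0 := mul_ne_zero hr0 (inv_ne_zero hs0)
  refine ⟨-p * r⁻¹, r * s⁻¹, ?_, ?_, ?_⟩
  · rw [norm_mul, norm_neg, norm_inv, ← div_eq_mul_inv, div_lt_one hrp]; exact hpr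
  · rw [norm_mul, norm_inv, hrn, mul_inv_cancel₀ (norm_ne_zero_iff.2 hs0)]
  · intro q F hq hF
    obtain ⟨g, hg⟩ : ∃ g, F = g * (r * s⁻¹) := ⟨F * (r * s⁻¹)⁻¹, by
      rw [inv_mul_cancel_right₀ hu']⟩
    have hE : F * s + q * F * t = p + q * r := by
      have h2 : ∀ x : ℍ[ℝ], x * (a : ℍ[ℝ]) = a • x := fun x => Quaternion.mul_coe_eq_smul a x
      have h3 : ∀ x : ℍ[ℝ], (a : ℍ[ℝ]) * x = a • x := fun x => Quaternion.coe_mul_eq_smul a x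
      rw [hs, ht, hp, hr]
      simp only [sub_mul, mul_sub, smul_mul_assoc, mul_smul_comm, one_mul, mul_one, h2, h3,
        mul_assoc] at hF ⊢
      refine sub_eq_zero.1 (Eq.trans ?_ (neg_eq_zero.2 (sub_eq_zero.2 hF)))
      module
    rw [hg] at ⊢
    congr 1
    apply alg_final _ _ _ _ hq
    · apply mul_right_cancel₀ hr0
      have h5 : g * r = F * s := by rw [hg, ← mul_assoc, inv_mul_cancel_right₀ hs0]
      have h6 : q * F * t = - (q * g * star (-p * r⁻¹) * r) := by
        calc q * F * t = q * g * (r * s⁻¹ * t) := by rw [hg]; noncomm_ring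
          _ = _ := by rw [hb]; noncomm_ring
      have h7 : (-p * r⁻¹) * r = -p := by rw [inv_mul_cancel_right₀ hr0]
      rw [sub_mul, sub_mul, h7, h5]
      rw [h6] at hE
      rw [← sub_eq_zero] at hE ⊢
      rw [← hE]
      abel
    · rw [norm_mul, norm_neg, norm_inv, ← div_eq_mul_inv, div_lt_one hrp]; exact hpr


section Final
variable (f : ℍ[ℝ] → ℍ[ℝ]) (c : ℕ → ℍ[ℝ])

theorem opA_conj
    (hf : ∀ q ∈ Metric.ball (0 : ℍ[ℝ]) 1, HasSum (fun n : ℕ => q ^ n * c n) (f q))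
    (z : ℂ) (hz : ‖z‖ < 1) (v : ℍ[ℝ]) (hv : v ≠ 0) :
    ∃ q : ℍ[ℝ], ‖q‖ = ‖z‖ ∧ v * q = z * v ∧ opA c z v = v * f q := by
  have h1 : v * (v⁻¹ * z * v) = z * v := by
    rw [mul_assoc, mul_inv_cancel_left₀ hv]
  have h2 : ‖v⁻¹ * z * v‖ = ‖z‖ := by
    rw [norm_mul, norm_mul, aux_norm_coe, norm_inv]
    have : ‖v‖ ≠ 0 := norm_ne_zero_iff.2 hv
    field_simp
  exact ⟨v⁻¹ * z * v, h2, h1, opA_apply f c hf z hz _ v (h2 ▸ hz) h1⟩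

theorem opA_real
    (hf : ∀ q ∈ Metric.ball (0 : ℍ[ℝ]) 1, HasSum (fun n : ℕ => q ^ n * c n) (f q))
    (x : ℝ) (hx : |x| < 1) (v : ℍ[ℝ]) : opA c x v = v * f x := by
  apply opA_apply f c hf
  · simpa using hx
  · simpa using hx
  · rw [Quaternion.coeComplex_coe, Quaternion.coe_commutes]

theorem conj_norm (q v : ℍ[ℝ]) (z : ℂ) (hv : v ≠ 0) (h : v * q = z * v) : ‖z‖ = ‖q‖ := by
  have h1 := congrArg norm h
  rw [norm_mul, norm_mul, aux_norm_coe, mul_comm] at h1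
  exact (mul_right_cancel₀ (norm_ne_zero_iff.2 hv) h1).symm

theorem sub_rm_apply (A : ℍ[ℝ] →L[ℂ] ℍ[ℝ]) (w v : ℍ[ℝ]) : (A - rm w) v = A v - v * w := rfl

theorem proper_local
    (hf : ∀ q ∈ Metric.ball (0 : ℍ[ℝ]) 1, HasSum (fun n : ℕ => q ^ n * c n) (f q))
    (hinj : Set.InjOn f (Metric.ball 0 1)) (q₀ : ℍ[ℝ]) (hq₀ : ‖q₀‖ < 1) :
    ∃ ε > 0, ∃ r < (1 : ℝ), ∀ q : ℍ[ℝ], ‖q‖ < 1 → ‖f q - f q₀‖ < ε → ‖q‖ ≤ r := by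
  obtain ⟨r, hr0, hr1⟩ := exists_between hq₀
  have hrp : 0 < r := (norm_nonneg _).trans_lt hr0
  have hsub : Metric.sphere (0 : ℍ[ℝ]) r ⊆ Metric.ball 0 1 :=
    Metric.sphere_subset_closedBall.trans (Metric.closedBall_subset_ball hr1)
  have hcont : ContinuousOn (fun q => ‖f q - f q₀‖) (Metric.sphere (0 : ℍ[ℝ]) r) :=
    (((aux_cont f c hf).mono hsub).sub continuousOn_const).norm
  have hne : (Metric.sphere (0 : ℍ[ℝ]) r).Nonempty :=
    ⟨(r : ℍ[ℝ]), by simp [abs_of_pos hrp]⟩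
  obtain ⟨q₁, hq₁, hmin⟩ := (isCompact_sphere (0 : ℍ[ℝ]) r).exists_isMinOn hne hcont
  have hq₁' : ‖q₁‖ = r := by simpa using hq₁
  have hpos : 0 < ‖f q₁ - f q₀‖ := by
    rw [norm_pos_iff, sub_ne_zero]
    intro h
    have := hinj (hsub hq₁) (by simpa using hq₀) h
    rw [this] at hq₁'
    linarith
  refine ⟨‖f q₁ - f q₀‖ / 2, by positivity, r, hr1, ?_⟩
  intro q' hq' hclose
  by_contra hlt
  push Not at hlt
  set ε := ‖f q₁ - f q₀‖ / 2 with hε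
  have hεp : 0 < ε := by positivity
  have key : ∀ z : ℂ, ‖z‖ ≤ r → ∀ v : ℍ[ℝ], ‖v‖ ≤ ε⁻¹ * ‖(opA c z - rm (f q')) v‖ := by
    refine aux_min (fun z => opA c z - rm (f q')) ?_ r _ hrp hr1 (by positivity) ?_ ?_
    · exact (opA_diff f c hf).sub (differentiableOn_const _)
    · intro z hz v hv
      by_contra hv0
      obtain ⟨q, hq1, -, hq3⟩ := opA_conj f c hf z (hz.trans_lt hr1) v hv0
      rw [sub_rm_apply, hq3, ← mul_sub] at hv
      have h5 := (mul_eq_zero.1 hv).resolve_left hv0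
      have h6 := hinj (by simpa [hq1] using hz.trans_lt hr1) (by simpa using hq') (sub_eq_zero.1 h5)
      rw [← h6, hq1] at hlt
      linarith
    · intro z hz v
      by_cases hv0 : v = 0
      · rw [hv0, norm_zero]; positivity
      obtain ⟨q, hq1, -, hq3⟩ := opA_conj f c hf z (hz.trans_lt hr1) v hv0
      rw [sub_rm_apply, hq3, ← mul_sub, norm_mul]
      have h7 : 2 * ε ≤ ‖f q - f q₀‖ := by
        have := hmin (show q ∈ Metric.sphere (0 : ℍ[ℝ]) r by simp [hq1, hz])
        have h8 : ‖f q₁ - f q₀‖ ≤ ‖f q - f q₀‖ := this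
        rw [hε]; linarith
      have h8 : ε ≤ ‖f q - f q'‖ := by
        have := norm_sub_le_norm_sub_add_norm_sub (f q) (f q') (f q₀)
        linarith
      rw [inv_mul_eq_div, le_div_iff₀ hεp]
      gcongr
  obtain ⟨z, v, hv, hvz⟩ := aux_conj q₀
  have hz := conj_norm q₀ v z hv hvz
  have h9 := key z (by rw [hz]; exact hr0.le) v
  rw [sub_rm_apply, opA_apply f c hf z (by rw [hz]; exact hq₀) q₀ v hq₀ hvz, ← mul_sub, norm_mul,
    norm_sub_rev, inv_mul_eq_div, le_div_iff₀ hεp] at h9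
  have : ‖v‖ * ‖f q' - f q₀‖ < ‖v‖ * ε := mul_lt_mul_of_pos_left hclose (norm_pos_iff.2 hv)
  linarith

theorem proper_global
    (hf : ∀ q ∈ Metric.ball (0 : ℍ[ℝ]) 1, HasSum (fun n : ℕ => q ^ n * c n) (f q))
    (hbij : Set.BijOn f (Metric.ball 0 1) (Metric.ball 0 1)) (ρ : ℝ) (hρ : ρ < 1) :
    ∃ r < (1 : ℝ), ∀ q : ℍ[ℝ], ‖q‖ < 1 → r < ‖q‖ → ρ < ‖f q‖ := by
  have hc : ∃ r < (1 : ℝ), ∀ q : ℍ[ℝ], ‖q‖ < 1 → f q ∈ Metric.closedBall (0 : ℍ[ℝ]) ρ → ‖q‖ ≤ r := by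
    refine (isCompact_closedBall (0 : ℍ[ℝ]) ρ).induction_on
      (p := fun s => ∃ r < (1 : ℝ), ∀ q : ℍ[ℝ], ‖q‖ < 1 → f q ∈ s → ‖q‖ ≤ r) ?_ ?_ ?_ ?_
    · exact ⟨0, one_pos, fun q _ h => h.elim⟩
    · rintro s t hst ⟨r, hr, h⟩
      exact ⟨r, hr, fun q hq hs => h q hq (hst hs)⟩
    · rintro s t ⟨r, hr, h⟩ ⟨r', hr', h'⟩
      refine ⟨max r r', max_lt hr hr', fun q hq hs => ?_⟩
      rcases hs with hs | hs
      · exact (h q hq hs).trans (le_max_left _ _)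
      · exact (h' q hq hs).trans (le_max_right _ _)
    · intro w hw
      obtain ⟨q₀, hq₀, rfl⟩ := hbij.surjOn (Metric.closedBall_subset_ball hρ hw)
      obtain ⟨ε, hε, r, hr, h⟩ := proper_local f c hf hbij.injOn q₀ (by simpa using hq₀)
      refine ⟨Metric.ball (f q₀) ε, mem_nhdsWithin_of_mem_nhds (Metric.ball_mem_nhds _ hε), r, hr, ?_⟩
      intro q hq hq'
      exact h q hq (by rwa [← dist_eq_norm])
  obtain ⟨r, hr, h⟩ := hc
  refine ⟨r, hr, fun q hq hrq => ?_⟩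
  by_contra hlt
  have := h q hq (by simpa using hlt)
  linarith

theorem exists_deriv_ne
    (hf : ∀ q ∈ Metric.ball (0 : ℍ[ℝ]) 1, HasSum (fun n : ℕ => q ^ n * c n) (f q))
    (hinj : Set.InjOn f (Metric.ball 0 1)) :
    ∃ a : ℝ, 0 ≤ a ∧ a ≤ 1 / 2 ∧ deriv (opA c) a 1 ≠ 0 := by
  by_contra hcon
  push Not at hcon
  have h1 := aux_deriv (fun z => opA c z 1) (by
    intro x hx0 hx1
    rw [← hcon x hx0 hx1]
    apply aux_deriv_apply
    apply DifferentiableAt.hasDerivAt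
    apply (opA_diff f c hf).differentiableAt
    apply Metric.isOpen_ball.mem_nhds
    simp [abs_of_nonneg hx0]
    linarith)
  rw [opA_real f c hf _ (by rw [abs_of_pos] <;> norm_num), opA_real f c hf _ (by simp), one_mul,
    one_mul] at h1
  have h2 := hinj (by simp; norm_num) (by simp) h1
  have h3 := Quaternion.coe_injective h2
  norm_num at h3

theorem deriv_right
    (hf : ∀ q ∈ Metric.ball (0 : ℍ[ℝ]) 1, HasSum (fun n : ℕ => q ^ n * c n) (f q))
    (a : ℝ) (ha : |a| < 1) (v : ℍ[ℝ]) : deriv (opA c) a v = v * deriv (opA c) a 1 := by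
  have hd : HasDerivAt (opA c) (deriv (opA c) a) (a : ℂ) := by
    apply DifferentiableAt.hasDerivAt
    apply (opA_diff f c hf).differentiableAt
    apply Metric.isOpen_ball.mem_nhds
    simpa using ha
  have h1 := aux_slope _ _ a (aux_deriv_apply hd v)
  have h2 := (aux_slope _ _ a (aux_deriv_apply hd 1)).const_mul v
  refine tendsto_nhds_unique (h1.congr' ?_) h2
  have h3 : ∀ᶠ x : ℝ in nhdsWithin a {a}ᶜ, |x| < 1 :=
    nhdsWithin_le_nhds (continuous_abs.continuousAt.eventually_lt_const ha)
  filter_upwards [h3] with x hx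
  rw [opA_real f c hf x hx, opA_real f c hf a ha, opA_real f c hf x hx, opA_real f c hf a ha,
    aux_smul, aux_smul, ← Complex.ofReal_inv, Quaternion.coeComplex_coe, one_mul, one_mul, ← mul_sub,
    ← mul_assoc, ← mul_assoc, Quaternion.coe_commutes]

theorem quat_id (v p w : ℍ[ℝ]) :
    ‖v - p * star w‖ ^ 2 = ‖p - v * w‖ ^ 2 + (‖v‖ ^ 2 - ‖p‖ ^ 2) * (1 - ‖w‖ ^ 2) := by
  simp only [pow_two, ← Quaternion.normSq_eq_norm_mul_self]
  simp only [Quaternion.normSq_def']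
  simp
  ring

theorem main_aux
    (hf : ∀ q ∈ Metric.ball (0 : ℍ[ℝ]) 1, HasSum (fun n : ℕ => q ^ n * c n) (f q))
    (hbij : Set.BijOn f (Metric.ball 0 1) (Metric.ball 0 1)) :
    ∃ (a : ℝ) (w u : ℍ[ℝ]), |a| < 1 ∧ ‖w‖ < 1 ∧ ‖u‖ = 1 ∧ ∀ q : ℍ[ℝ], ‖q‖ < 1 →
      (q - a) * (1 - f q * star w) * u = (1 - a * q) * (f q - w) := by
  obtain ⟨a, ha0, ha1, hd⟩ := exists_deriv_ne f c hf hbij.injOn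
  have ha : |a| < 1 := by rw [abs_of_nonneg ha0]; linarith
  have haB : (a : ℍ[ℝ]) ∈ Metric.ball (0 : ℍ[ℝ]) 1 := by simpa using ha
  have hB : ∀ q : ℍ[ℝ], ‖q‖ < 1 → ‖f q‖ < 1 := fun q hq => by
    simpa using hbij.mapsTo (show q ∈ Metric.ball (0 : ℍ[ℝ]) 1 by simpa using hq)
  obtain ⟨w, hw⟩ : ∃ w, w = f a := ⟨_, rfl⟩
  have hw1 : ‖w‖ < 1 := by rw [hw]; exact hB _ (by simpa using ha)
  have hle : ∀ z : ℂ, ‖z‖ < 1 → ∀ v : ℍ[ℝ], ‖opA c z v‖ ≤ ‖v‖ := by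
    intro z hz v
    by_cases hv0 : v = 0
    · simp [hv0]
    obtain ⟨q, hq1, -, hq3⟩ := opA_conj f c hf z hz v hv0
    rw [hq3, norm_mul]
    have := hB q (hq1 ▸ hz)
    nlinarith [norm_nonneg v]
  have hw2 : 0 < 1 - ‖w‖ ^ 2 := by nlinarith [norm_nonneg w]
  obtain ⟨U, hU1, hU2, hU3⟩ := aux_main (opA c) (opA_diff f c hf) a ha0 ha1 (rm w) (rm (star w))
    (by
      apply ContinuousLinearMap.ext
      intro v
      rw [opA_real f c hf a ha, rm_apply, hw])
    (by
      intro z hz v hv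
      rw [rm_apply] at hv
      by_contra hv0
      have h1 := congrArg norm (sub_eq_zero.1 hv)
      rw [norm_mul, Quaternion.norm_star] at h1
      nlinarith [hle z hz v, norm_pos_iff.2 hv0, norm_nonneg w])
    (by
      intro z hz hza v hv
      rw [rm_apply] at hv
      by_contra hv0
      obtain ⟨q, hq1, hq2, hq3⟩ := opA_conj f c hf z hz v hv0
      rw [hq3, ← mul_sub] at hv
      have h5 := sub_eq_zero.1 ((mul_eq_zero.1 hv).resolve_left hv0)
      rw [hw] at h5
      have h6 := hbij.injOn (by simpa [hq1] using hz) haB h5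
      rw [h6, ← Quaternion.coe_commutes] at hq2
      have h7 := mul_right_cancel₀ hv0 hq2
      apply hza
      apply Complex.ext
      · have := congrArg QuaternionAlgebra.re h7
        simpa using this.symm
      · have := congrArg QuaternionAlgebra.imI h7
        simpa using this.symm)
    (by
      intro v hv
      rw [deriv_right f c hf a ha] at hv
      exact (mul_eq_zero.1 hv).resolve_right hd)
    (by
      intro z hz v
      rw [rm_apply, rm_apply]
      apply le_of_sq_le_sq _ (norm_nonneg _)
      rw [quat_id]
      have : ‖opA c z v‖ ^ 2 ≤ ‖v‖ ^ 2 := by gcongr; exact hle z hz v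
      have := mul_nonneg (sub_nonneg.2 this) hw2.le
      linarith)
    (by
      intro δ hδ
      have hη : 0 < (1 - ‖w‖) / 2 := by linarith
      obtain ⟨r, hr, hp⟩ := proper_global f c hf hbij
        (max (‖w‖ + (1 - ‖w‖) / 2) (1 - δ * ((1 - ‖w‖) / 2) ^ 2))
        (max_lt (by linarith) (by have := mul_pos hδ (pow_pos hη 2); linarith))
      obtain ⟨r', hr', hr1⟩ := exists_between hr
      refine ⟨r', hr1, fun z hz0 hz1 v => ?_⟩
      by_cases hv0 : v = 0
      · simp [hv0]
      obtain ⟨q, hq1, -, hq3⟩ := opA_conj f c hf z hz1 v hv0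
      have hfq := hp q (by rw [hq1]; exact hz1) (by rw [hq1]; linarith)
      have hfq1 := hB q (by rw [hq1]; exact hz1)
      rw [max_lt_iff] at hfq
      rw [rm_apply, rm_apply]
      apply real_aux _ _ _ (1 - ‖f q‖) δ ‖v‖ (norm_nonneg _) hδ hη (norm_nonneg _)
      · rw [quat_id, hq3, norm_mul]
        have e1 : 0 ≤ 1 - ‖f q‖ ^ 2 := by nlinarith [norm_nonneg (f q)]
        have e2 : (1 - ‖f q‖ ^ 2) * (1 - ‖w‖ ^ 2) ≤ 2 * (1 - ‖f q‖) := by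
          calc (1 - ‖f q‖ ^ 2) * (1 - ‖w‖ ^ 2) ≤ (1 - ‖f q‖ ^ 2) * 1 := by
                gcongr; nlinarith [norm_nonneg w]
            _ ≤ _ := by nlinarith
        have e3 := mul_le_mul_of_nonneg_right e2 (sq_nonneg ‖v‖)
        nlinarith
      · have := norm_sub_norm_le (opA c z v) (v * w)
        rw [hq3, norm_mul, norm_mul] at this
        rw [hq3]
        nlinarith [norm_nonneg v]
      · linarith)
    aux_sc
  obtain ⟨k, hk⟩ : ∃ k : ℝ, k = 1 - ‖w‖ ^ 2 := ⟨_, rfl⟩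
  have hk0 : (k : ℍ[ℝ]) ≠ 0 := by
    intro h
    rw [← Quaternion.coe_zero] at h
    have := Quaternion.coe_injective h
    linarith
  have hww : w * star w = ((‖w‖ ^ 2 : ℝ) : ℍ[ℝ]) := by
    rw [Quaternion.self_mul_star, Quaternion.normSq_eq_norm_mul_self, pow_two]
  have hUk : ∀ v : ℍ[ℝ], U (v * k) = v * (((1 - a * a : ℝ) : ℍ[ℝ]) * deriv (opA c) a 1) := by
    intro v
    have h1 := hU3 v
    rw [rm_apply, opA_real f c hf a ha, ← hw, mul_assoc, hww, deriv_right f c hf a ha, aux_smul] at h1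
    have h2 : v - v * ((‖w‖ ^ 2 : ℝ) : ℍ[ℝ]) = v * k := by
      rw [hk]; push_cast; rw [mul_sub, mul_one]
    have h3 : ((1 - a * a : ℂ) : ℍ[ℝ]) = ((1 - a * a : ℝ) : ℍ[ℝ]) := by
      rw [← Quaternion.coeComplex_coe]; push_cast; rfl
    rw [h2, h3] at h1
    rw [h1, ← mul_assoc, ← mul_assoc, Quaternion.coe_commutes]
  obtain ⟨u, hu⟩ : ∃ u : ℍ[ℝ], ∀ y, U y = y * u := by
    refine ⟨(k : ℍ[ℝ])⁻¹ * (((1 - a * a : ℝ) : ℍ[ℝ]) * deriv (opA c) a 1), fun y => ?_⟩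
    rw [← mul_assoc, ← hUk, inv_mul_cancel_right₀ hk0]
  refine ⟨a, w, u, ha, hw1, ?_, ?_⟩
  · have := hU1 1
    rwa [hu, one_mul, norm_one] at this
  · intro q hq
    obtain ⟨z, v, hv, hvz⟩ := aux_conj q
    have hz : ‖z‖ < 1 := by rw [conj_norm q v z hv hvz]; exact hq
    have h1 := hU2 z hz v
    rw [hu, rm_apply, rm_apply, opA_apply f c hf z hz q v hq hvz, aux_smul, aux_smul] at h1
    have e1 : ((z - a : ℂ) : ℍ[ℝ]) * v = v * (q - a) := by
      have : ((z - a : ℂ) : ℍ[ℝ]) = (z : ℍ[ℝ]) - (a : ℍ[ℝ]) := by ext <;> simp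
      rw [this, sub_mul, mul_sub, hvz, Quaternion.coe_commutes]
    have e2 : ((1 - a * z : ℂ) : ℍ[ℝ]) * v = v * (1 - a * q) := by
      have : ((1 - a * z : ℂ) : ℍ[ℝ]) = 1 - (a : ℍ[ℝ]) * (z : ℍ[ℝ]) := by ext <;> simp
      rw [this, sub_mul, mul_sub, mul_assoc, ← hvz, one_mul, mul_one, ← mul_assoc, ← mul_assoc,
        Quaternion.coe_commutes]
    apply mul_left_cancel₀ hv
    calc v * ((q - a) * (1 - f q * star w) * u)
        = (v * (q - a)) * ((1 - f q * star w) * u) := by noncomm_ring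
      _ = ((z - a : ℂ) : ℍ[ℝ]) * ((v - v * f q * star w) * u) := by rw [← e1]; noncomm_ring
      _ = ((1 - a * z : ℂ) : ℍ[ℝ]) * v * (f q - w) := by rw [h1]; noncomm_ring
      _ = _ := by rw [e2]; noncomm_ring

end Final

end Quat

/-- Every regular bijection of the unit ball `𝔹` onto itself is a regular Moebius
transformation: `f(q) = (1 − q·conj a)^{-*} * (q − a)·u`, given explicitly by
`f(q) = (|a|²q² − 2Re(a)q + 1)⁻¹ · (−q²a + q(1 + a²) − a) · u`. -/
theorem regular_bijection_is_moebius (f : ℍ[ℝ] → ℍ[ℝ]) (c : ℕ → ℍ[ℝ])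
    (hf : ∀ q ∈ Metric.ball (0 : ℍ[ℝ]) 1, HasSum (fun n : ℕ => q ^ n * c n) (f q))
    (hbij : Set.BijOn f (Metric.ball 0 1) (Metric.ball 0 1)) :
    ∃ a u : ℍ[ℝ], ‖a‖ < 1 ∧ ‖u‖ = 1 ∧
      ∀ q ∈ Metric.ball (0 : ℍ[ℝ]) 1,
        f q = (((‖a‖ ^ 2 : ℝ) : ℍ[ℝ]) * q ^ 2 - ((2 * a.re : ℝ) : ℍ[ℝ]) * q + 1)⁻¹ *
          (-(q ^ 2) * a + q * (1 + a ^ 2) - a) * u := by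
  obtain ⟨a, w, u, ha, hw, hu, h⟩ := main_aux f c hf hbij
  obtain ⟨b, u', hb, hu', h'⟩ := alg_main a w u ha hw hu
  refine ⟨b, u', hb, hu', fun q hq => ?_⟩
  have hq' : ‖q‖ < 1 := by simpa using hq
  exact h' q (f q) hq' (h q hq')
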